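/- arXiv:2007.11552 — 2 statements merged into one kernel-verified Lean document; each statement's English description precedes it below -/
import Mathlib

section
/- Let (S_j)_{j∈J} be a directed system of commutative rings indexed by a nonempty directed partially ordered set J, such that each S_j is Noetherian and each transition homomorphism S_i → S_j (for i ≤ j) is flat, and let S = colim_j S_j be the colimit ring. Then for every n ≥ 0 the polynomial ring S[x_1, …, x_n] is a coherent ring. -/
/-- A commutative ring is *coherent* if every finitely generated ideal is finitely
presented as a module over the ring. -/
def IsCoherentRing (R : Type*) [CommRing R] : Prop :=
  ∀ J : Ideal R, J.FG → Module.FinitePresentation R J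

/-!
A finitely generated ideal of `S[x]` has finitely many generators with finitely many coefficients,
so it is extended from a finitely generated ideal of some `S_j[x]`, and this
ring is Noetherian, hence coherent.
The equational criterion shows that a colimit along flat maps is flat over each stage: a linear
relation over the colimit already holds at a later stage, where it is trivial. Hence `S[x]` is
flat over `S_j[x]`, so the extended ideal is a base change and finite presentation carries over.
-/

open scoped TensorProduct

section ExtendedIdeal

variable {A B : Type*} [CommRing A] [CommRing B] [Algebra A B]

theorem map_rid_baseChange_eq_map_algebraMap (I : Ideal A) :
    (Submodule.baseChange B I).map (TensorProduct.AlgebraTensorModule.rid A B B).toLinearMap =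
      I.map (algebraMap A B) := by
  rw [Submodule.baseChange_eq_span, Submodule.map_span]
  change Submodule.span B (_ '' (TensorProduct.mk A B A 1 '' I)) = Ideal.span (algebraMap A B '' I)
  rw [Set.image_image]
  simp [Algebra.smul_def]

theorem finitePresentation_map_algebraMap_of_flat [Module.Flat A B] (I : Ideal A)
    [Module.FinitePresentation A I] :
    Module.FinitePresentation B (I.map (algebraMap A B)) := by
  have e : B ⊗[A] I ≃ₗ[B] I.map (algebraMap A B) :=
    Submodule.toBaseChange.toLinearEquiv B I ≪≫ₗ
      (TensorProduct.AlgebraTensorModule.rid A B B).submoduleMap (Submodule.baseChange B I) ≪≫ₗ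
      LinearEquiv.ofEq _ _ (map_rid_baseChange_eq_map_algebraMap I)
  have : Module.FinitePresentation B (B ⊗[A] I) :=
    FinitePresentation.of_isBaseChange (TensorProduct.mk A B I 1) (TensorProduct.isBaseChange A I B)
  exact .of_equiv e

end ExtendedIdeal

theorem IsCoherentRing.of_isNoetherianRing (R : Type*) [CommRing R] [IsNoetherianRing R] :
    IsCoherentRing R :=
  fun I _ => Module.finitePresentation_of_finite R I

theorem IsCoherentRing.of_forall_finset_subset_range_flat {B : Type*} [CommRing B]
    (h : ∀ s : Finset B, ∃ (A : Type*) (_ : CommRing A) (φ : A →+* B),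
      IsCoherentRing A ∧ φ.Flat ∧ (s : Set B) ⊆ Set.range φ) : IsCoherentRing B := by
  classical
  rintro I ⟨s, hsI⟩
  obtain ⟨A, _, φ, hA, hφ, hs⟩ := h s
  rw [← Set.image_univ] at hs
  obtain ⟨t, -, rfl⟩ := Finset.subset_set_image_iff.mp hs
  algebraize [φ]
  have := hA (Ideal.span t) ⟨t, rfl⟩
  have hI : I = (Ideal.span t).map (algebraMap A B) := by
    rw [← hsI, Ideal.map_span, Finset.coe_image]; rfl
  rw [hI]
  exact finitePresentation_map_algebraMap_of_flat _

section Flat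

variable {R S : Type*} [CommRing R] [CommRing S]

theorem flat_of_forall_relation_lifts_to_flat (φ : R →+* S)
    (h : ∀ (l : ℕ) (a : Fin l → R) (x : Fin l → S), ∑ i, φ (a i) * x i = 0 →
      ∃ (T : Type*) (_ : CommRing T) (ψ : R →+* T) (χ : T →+* S) (y : Fin l → T),
        ψ.Flat ∧ χ.comp ψ = φ ∧ ∑ i, ψ (a i) * y i = 0 ∧ ∀ i, χ (y i) = x i) :
    φ.Flat := by
  algebraize [φ]
  refine Module.Flat.of_forall_isTrivialRelation (R := R) (M := S) fun {l a x} hax => ?_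
  obtain ⟨T, _, ψ, χ, y, hψ, rfl, hay, hyx⟩ := h l a x hax
  algebraize [ψ]
  obtain ⟨k, b, z, hyz, hab⟩ :=
    Module.Flat.isTrivialRelation_of_sum_smul_eq_zero (R := R) (M := T) hay
  refine ⟨k, b, χ ∘ z, fun i => ?_, hab⟩
  calc x i = χ (∑ q, ψ (b i q) * z q) := by rw [← hyx i, hyz i]; rfl
    _ = ∑ q, χ (ψ (b i q)) * χ (z q) := by simp only [map_sum, map_mul]

attribute [local instance] MvPolynomial.algebraMvPolynomial in
theorem mvPolynomial_map_flat {σ : Type*} {φ : R →+* S} (hφ : φ.Flat) :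
    (MvPolynomial.map φ : MvPolynomial σ R →+* MvPolynomial σ S).Flat := by
  algebraize [φ]
  exact Module.Flat.isBaseChange R (MvPolynomial σ R) S (MvPolynomial σ S)
    (Algebra.IsPushout.out (R := R) (S := MvPolynomial σ R))

end Flat

section DirectLimit

variable {J : Type*} [Preorder J] {G : J → Type*} [∀ j, CommRing (G j)]
  (f : ∀ i j, i ≤ j → G i →+* G j)

theorem monotone_range_directLimit_of :
    Monotone fun j => Set.range (Ring.DirectLimit.of G (f · · ·) j) := by
  rintro i j hij _ ⟨x, rfl⟩
  exact ⟨f i j hij x, Ring.DirectLimit.of_f hij x⟩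

variable [IsDirectedOrder J]

theorem exists_subset_range_directLimit_of [Nonempty J]
    (s : Finset (Ring.DirectLimit G (f · · ·))) :
    ∃ j, (s : Set (Ring.DirectLimit G (f · · ·))) ⊆ Set.range (Ring.DirectLimit.of G (f · · ·) j) :=
  (monotone_range_directLimit_of f).directed_le.exists_mem_subset_of_finset_subset_biUnion
    fun x _ => Set.mem_iUnion.mpr (Ring.DirectLimit.exists_of x)

theorem exists_subset_range_mvPolynomial_map_directLimit_of [Nonempty J] {σ : Type*}
    (s : Finset (MvPolynomial σ (Ring.DirectLimit G (f · · ·)))) :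
    ∃ j, (s : Set (MvPolynomial σ (Ring.DirectLimit G (f · · ·)))) ⊆
      Set.range (MvPolynomial.map (Ring.DirectLimit.of G (f · · ·) j)) := by
  classical
  obtain ⟨j, hj⟩ := exists_subset_range_directLimit_of f (s.biUnion MvPolynomial.coeffs)
  refine ⟨j, fun p hp => MvPolynomial.mem_range_map_iff_coeffs_subset.mpr ?_⟩
  exact (Finset.coe_subset.mpr (Finset.subset_biUnion_of_mem _ hp)).trans hj

variable [DirectedSystem G fun i j h => ⇑(f i j h)]

theorem exists_lift_relation_directLimit_of {j : J} {l : ℕ} (a : Fin l → G j)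
    (x : Fin l → Ring.DirectLimit G (f · · ·))
    (hax : ∑ i, Ring.DirectLimit.of G (f · · ·) j (a i) * x i = 0) :
    ∃ (k : J) (hjk : j ≤ k) (y : Fin l → G k),
      ∑ i, f j k hjk (a i) * y i = 0 ∧ ∀ i, Ring.DirectLimit.of G (f · · ·) k (y i) = x i := by
  classical
  have : Nonempty J := ⟨j⟩
  obtain ⟨i₀, hi₀⟩ := exists_subset_range_directLimit_of f (Finset.univ.image x)
  obtain ⟨m, hjm, hi₀m⟩ := exists_ge_ge j i₀
  choose y hy using fun i => monotone_range_directLimit_of f hi₀m (hi₀ (by simp : x i ∈ _))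
  have hrel : Ring.DirectLimit.of G (f · · ·) m (∑ i, f j m hjm (a i) * y i) = 0 := by
    simpa only [map_sum, map_mul, Ring.DirectLimit.of_f, hy] using hax
  obtain ⟨k, hmk, hk⟩ := Ring.DirectLimit.of.zero_exact hrel
  refine ⟨k, hjm.trans hmk, fun i => f m k hmk (y i), ?_, fun i => ?_⟩
  · simpa only [map_sum, map_mul,
      DirectedSystem.map_map (f := fun i j h => ⇑(f i j h)) hjm hmk] using hk
  · rw [Ring.DirectLimit.of_f, hy]

theorem directLimit_of_flat (hflat : ∀ i j (h : i ≤ j), (f i j h).Flat) (j : J) :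
    (Ring.DirectLimit.of G (f · · ·) j).Flat := by
  refine flat_of_forall_relation_lifts_to_flat _ fun l a x hax => ?_
  obtain ⟨k, hjk, y, hay, hyx⟩ := exists_lift_relation_directLimit_of f a x hax
  exact ⟨G k, inferInstance, f j k hjk, Ring.DirectLimit.of G (f · · ·) k, y, hflat j k hjk,
    RingHom.ext (Ring.DirectLimit.of_f hjk), hay, hyx⟩

theorem isCoherentRing_mvPolynomial_directLimit_general [Nonempty J] {σ : Type*}
    (hcoh : ∀ j, IsCoherentRing (MvPolynomial σ (G j)))
    (hflat : ∀ i j (h : i ≤ j), (f i j h).Flat) :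
    IsCoherentRing (MvPolynomial σ (Ring.DirectLimit G (f · · ·))) := by
  refine .of_forall_finset_subset_range_flat fun s => ?_
  obtain ⟨j, hj⟩ := exists_subset_range_mvPolynomial_map_directLimit_of f s
  exact ⟨MvPolynomial σ (G j), inferInstance,
    MvPolynomial.map (Ring.DirectLimit.of G (f · · ·) j), hcoh j,
    mvPolynomial_map_flat (directLimit_of_flat f hflat j), hj⟩

end DirectLimit

/-- Let `(S_j)_{j ∈ J}` be a directed system of commutative rings indexed by
a nonempty directed partially ordered set `J`, such that each `S_j` is Noetherian and each
transition homomorphism `S_i → S_j` (for `i ≤ j`) is flat, and let `S = colim_j S_j` be the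
colimit ring. Then for every `n ≥ 0` the polynomial ring `S[x_1, …, x_n]` is coherent. -/
theorem isCoherentRing_mvPolynomial_directLimit {J : Type*} [PartialOrder J] [Nonempty J]
    [IsDirected J (· ≤ ·)] (G : J → Type*) [∀ j, CommRing (G j)]
    (hNoeth : ∀ j, IsNoetherianRing (G j))
    (f : ∀ i j, i ≤ j → G i →+* G j)
    [DirectedSystem G fun i j h => ⇑(f i j h)]
    (hflat : ∀ i j (h : i ≤ j), (f i j h).Flat)
    (n : ℕ) :
    IsCoherentRing (MvPolynomial (Fin n) (Ring.DirectLimit G fun i j h => ⇑(f i j h))) :=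
  isCoherentRing_mvPolynomial_directLimit_general f
    (fun j => have := hNoeth j; .of_isNoetherianRing (MvPolynomial (Fin n) (G j))) hflat
end

section
/- Let R be a ℤ-graded commutative ring that is evenly graded (the homogeneous component R_i is zero for every odd integer i) and 2-periodic (there is a unit of R that is homogeneous of degree 2). Then the assignment 𝔮 ↦ 𝔮 ∩ R_0 is a bijection from the set of homogeneous prime ideals of R to the set of prime ideals of the degree-zero subring R_0, with inverse 𝔭 ↦ 𝔭·R (the ideal of R generated by 𝔭), and both assignments preserve inclusions of ideals. -/
/-!
The degree-zero projection `R → R₀` is an `R₀`-linear retraction of the inclusion, so `𝔭·R ∩ R₀ = 𝔭`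
for every ideal `𝔭` of `R₀`. Multiplying by a power of the unit of degree 2 moves a
homogeneous element of even degree to degree zero without changing which ideals contain it. Hence
a homogeneous ideal is determined by its degree-zero part, and its primality, which may be tested
on homogeneous elements, can be tested in degree zero.
-/

open DirectSum SetLike

theorem comap_map_eq_self_of_retraction {S R : Type*} [Semiring S] [Semiring R] (f : S →+* R)
    (π : R →+ S) (π_mul : ∀ r s, π (r * f s) = π r * s) (π_one : π 1 = 1) (p : Ideal S) :
    (p.map f).comap f = p := by
  have π_mem {y : R} (hy : y ∈ p.map f) : π y ∈ p := by
    induction hy using Submodule.closure_induction with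
    | zero => simp only [map_zero, zero_mem]
    | add x y _ _ hx hy => simpa only [map_add] using add_mem hx hy
    | smul_mem r x hx =>
      obtain ⟨s, hs, rfl⟩ := hx
      simpa only [smul_eq_mul, π_mul] using p.mul_mem_left (π r) hs
  have π_apply (s : S) : π (f s) = s := by simpa only [one_mul, π_one] using π_mul 1 s
  exact le_antisymm (fun s hs ↦ π_apply s ▸ π_mem hs) Ideal.le_comap_map

theorem mem_ideal_iff_of_associated {R : Type*} [CommSemiring R] {x y : R} (h : Associated x y)
    (I : Ideal R) : x ∈ I ↔ y ∈ I :=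
  ⟨I.mem_of_dvd h.dvd, I.mem_of_dvd h.symm.dvd⟩

section HomogeneousUnits

variable {ι σ R : Type*} [DecidableEq ι] [SetLike σ R]

theorem units_inv_mem_graded [AddGroup ι] [Semiring R] [AddSubmonoidClass σ R] (𝒜 : ι → σ)
    [GradedRing 𝒜] {u : Rˣ} {i : ι} (hu : (u : R) ∈ 𝒜 i) : ((u⁻¹ : Rˣ) : R) ∈ 𝒜 (-i) := by
  have mul_component : (u : R) * decompose 𝒜 ((u⁻¹ : Rˣ) : R) (-i) = 1 := by
    rw [← coe_decompose_mul_add_of_left_mem 𝒜 hu, Units.mul_inv, add_neg_cancel,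
      decompose_of_mem_same 𝒜 (one_mem_graded 𝒜)]
  rw [Units.inv_eq_of_mul_eq_one_right mul_component]
  exact coe_mem _

theorem units_zpow_mem_graded [AddGroup ι] [Semiring R] [AddSubmonoidClass σ R] (𝒜 : ι → σ)
    [GradedRing 𝒜] {u : Rˣ} {i : ι} (hu : (u : R) ∈ 𝒜 i) (n : ℤ) :
    ((u ^ n : Rˣ) : R) ∈ 𝒜 (n • i) := by
  cases n with
  | ofNat n => simpa using pow_mem_graded n hu
  | negSucc n =>
    rw [zpow_negSucc, negSucc_zsmul]
    exact units_inv_mem_graded 𝒜 (by simpa using pow_mem_graded (n + 1) hu)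

theorem exists_associated_mem_gradeZero [AddGroup ι] [CommSemiring R] [AddSubmonoidClass σ R]
    (𝒜 : ι → σ) [GradedRing 𝒜] {u : Rˣ} {i : ι} (hu : (u : R) ∈ 𝒜 i) {n : ℤ} {x : R}
    (hx : x ∈ 𝒜 (n • i)) : ∃ a ∈ 𝒜 0, Associated x a := by
  refine ⟨x * (u ^ (-n) : Rˣ), ?_, u ^ (-n), rfl⟩
  simpa only [neg_zsmul, add_neg_cancel] using mul_mem_graded hx (units_zpow_mem_graded 𝒜 hu (-n))

end HomogeneousUnits

theorem exists_associated_mem_gradeZero_of_even_of_periodic {σ R : Type*} [CommSemiring R]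
    [SetLike σ R] [AddSubmonoidClass σ R] (𝒜 : ℤ → σ) [GradedRing 𝒜]
    (heven : ∀ i, Odd i → ∀ x ∈ 𝒜 i, x = 0) (hperiodic : ∃ u : Rˣ, (u : R) ∈ 𝒜 2)
    {x : R} (hx : IsHomogeneousElem 𝒜 x) : ∃ a ∈ 𝒜 0, Associated x a := by
  obtain ⟨i, hx⟩ := hx
  obtain ⟨k, rfl⟩ | hodd := Int.even_or_odd i
  · obtain ⟨u, hu⟩ := hperiodic
    exact exists_associated_mem_gradeZero 𝒜 hu (n := k) (by rwa [smul_eq_mul, mul_two])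
  · exact ⟨0, zero_mem _, heven i hodd x hx ▸ .refl _⟩

section GradeZero

variable {ι σ R : Type*} [SetLike σ R]

section Ring

variable [DecidableEq ι] [AddMonoid ι] [Ring R] [AddSubgroupClass σ R] (𝒜 : ι → σ) [GradedRing 𝒜]

/-- The projection of a graded ring onto its degree-zero subring. It is additive and linear over
the subring, but not multiplicative in general; `GradedRing.projZeroRingHom` is the multiplicative
version for canonically ordered degrees. -/
def gradeZeroProj : R →+ GradeZero.subring 𝒜 :=
  (GradedRing.proj 𝒜 0).codRestrict (GradeZero.subring 𝒜) fun x ↦ coe_mem (decompose 𝒜 x 0)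

theorem gradeZeroProj_mul (r : R) (a : GradeZero.subring 𝒜) :
    gradeZeroProj 𝒜 (r * a) = gradeZeroProj 𝒜 r * a :=
  Subtype.ext (coe_decompose_mul_of_right_mem_zero 𝒜 a.2)

theorem gradeZeroProj_one : gradeZeroProj 𝒜 1 = 1 :=
  Subtype.ext (decompose_of_mem_same 𝒜 (one_mem_graded 𝒜))

theorem comap_map_gradeZero (p : Ideal (GradeZero.subring 𝒜)) :
    (p.map (GradeZero.subring 𝒜).subtype).comap (GradeZero.subring 𝒜).subtype = p :=
  comap_map_eq_self_of_retraction _ (gradeZeroProj 𝒜) (gradeZeroProj_mul 𝒜) (gradeZeroProj_one 𝒜) p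

theorem isHomogeneous_map_gradeZero (p : Ideal (GradeZero.subring 𝒜)) :
    (p.map (GradeZero.subring 𝒜).subtype).IsHomogeneous 𝒜 :=
  Ideal.homogeneous_span 𝒜 _ (by rintro _ ⟨a, -, rfl⟩; exact ⟨0, a.2⟩)

end Ring

section CommRing

variable [CommRing R] [AddSubgroupClass σ R]

theorem eq_of_comap_gradeZero_eq [DecidableEq ι] [AddMonoid ι] {𝒜 : ι → σ} [GradedRing 𝒜]
    (hassoc : ∀ x, IsHomogeneousElem 𝒜 x → ∃ a ∈ 𝒜 0, Associated x a)
    {I J : Ideal R} (hI : I.IsHomogeneous 𝒜) (hJ : J.IsHomogeneous 𝒜)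
    (h : I.comap (GradeZero.subring 𝒜).subtype = J.comap (GradeZero.subring 𝒜).subtype) :
    I = J := by
  suffices (⟨I, hI⟩ : HomogeneousIdeal 𝒜) = ⟨J, hJ⟩ from congrArg HomogeneousIdeal.toIdeal this
  refine HomogeneousIdeal.ext' fun i x hx ↦ ?_
  obtain ⟨a, ha, hxa⟩ := hassoc x ⟨i, hx⟩
  calc
    x ∈ I ↔ a ∈ I := mem_ideal_iff_of_associated hxa I
    _ ↔ a ∈ J := SetLike.ext_iff.mp h ⟨a, ha⟩
    _ ↔ x ∈ J := (mem_ideal_iff_of_associated hxa J).symm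

theorem map_comap_gradeZero [DecidableEq ι] [AddMonoid ι] {𝒜 : ι → σ} [GradedRing 𝒜]
    (hassoc : ∀ x, IsHomogeneousElem 𝒜 x → ∃ a ∈ 𝒜 0, Associated x a)
    {I : Ideal R} (hI : I.IsHomogeneous 𝒜) :
    (I.comap (GradeZero.subring 𝒜).subtype).map (GradeZero.subring 𝒜).subtype = I :=
  eq_of_comap_gradeZero_eq hassoc (isHomogeneous_map_gradeZero 𝒜 _) hI (comap_map_gradeZero 𝒜 _)

theorem isPrime_comap_gradeZero_iff [AddCommMonoid ι] [LinearOrder ι] [IsOrderedCancelAddMonoid ι]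
    {𝒜 : ι → σ} [GradedRing 𝒜] (hassoc : ∀ x, IsHomogeneousElem 𝒜 x → ∃ a ∈ 𝒜 0, Associated x a)
    {I : Ideal R} (hI : I.IsHomogeneous 𝒜) :
    (I.comap (GradeZero.subring 𝒜).subtype).IsPrime ↔ I.IsPrime := by
  refine ⟨fun hprime ↦ hI.isPrime_of_homogeneous_mem_or_mem ?_ fun {x y} hx hy hxy ↦ ?_,
    fun hprime ↦ hprime.comap _⟩
  · rintro rfl
    exact hprime.ne_top Ideal.comap_top
  · obtain ⟨a, ha, hxa⟩ := hassoc x hx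
    obtain ⟨b, hb, hyb⟩ := hassoc y hy
    have hab : (⟨a, ha⟩ * ⟨b, hb⟩ : GradeZero.subring 𝒜) ∈
        I.comap (GradeZero.subring 𝒜).subtype :=
      (mem_ideal_iff_of_associated (hxa.mul_mul hyb) I).mp hxy
    exact (hprime.mem_or_mem hab).imp
      (mem_ideal_iff_of_associated hxa I).mpr (mem_ideal_iff_of_associated hyb I).mpr

end CommRing

end GradeZero

theorem homogeneousPrime_equiv_prime_gradeZero_general {ι σ R : Type*} [CommRing R]
    [AddCommMonoid ι] [LinearOrder ι] [IsOrderedCancelAddMonoid ι]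
    [SetLike σ R] [AddSubgroupClass σ R] (𝒜 : ι → σ) [GradedRing 𝒜]
    (hassoc : ∀ x, IsHomogeneousElem 𝒜 x → ∃ a ∈ 𝒜 0, Associated x a) :
    (∀ q : Ideal R, q.IsHomogeneous 𝒜 →
      ((q.comap (GradeZero.subring 𝒜).subtype).IsPrime ↔ q.IsPrime) ∧
      (q.comap (GradeZero.subring 𝒜).subtype).map (GradeZero.subring 𝒜).subtype = q) ∧
    (∀ p : Ideal (GradeZero.subring 𝒜),
      (p.map (GradeZero.subring 𝒜).subtype).IsHomogeneous 𝒜 ∧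
      ((p.map (GradeZero.subring 𝒜).subtype).IsPrime ↔ p.IsPrime) ∧
      (p.map (GradeZero.subring 𝒜).subtype).comap (GradeZero.subring 𝒜).subtype = p) := by
  refine ⟨fun q hq ↦ ⟨isPrime_comap_gradeZero_iff hassoc hq, map_comap_gradeZero hassoc hq⟩,
    fun p ↦ ⟨isHomogeneous_map_gradeZero 𝒜 p, ?_, comap_map_gradeZero 𝒜 p⟩⟩
  rw [← isPrime_comap_gradeZero_iff hassoc (isHomogeneous_map_gradeZero 𝒜 p),
    comap_map_gradeZero 𝒜 p]

/-- Let `R` be a `ℤ`-graded commutative ring that is evenly graded (the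
homogeneous component `R_i` vanishes for every odd `i`) and 2-periodic (there is a unit of
`R` that is homogeneous of degree 2). Then `𝔮 ↦ 𝔮 ∩ R_0` is a bijection from the set of
homogeneous prime ideals of `R` to the set of prime ideals of the degree-zero subring `R_0`,
with inverse `𝔭 ↦ 𝔭·R`, and both assignments preserve inclusions of ideals. -/
theorem homogeneousPrime_equiv_prime_gradeZero {R : Type*} [CommRing R]
    (𝒜 : ℤ → AddSubgroup R) [GradedRing 𝒜]
    (heven : ∀ i : ℤ, Odd i → 𝒜 i = ⊥)
    (hperiodic : ∃ u : Rˣ, (u : R) ∈ 𝒜 2) :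
    (∀ q : Ideal R, Ideal.IsHomogeneous 𝒜 q → q.IsPrime →
      (q.comap (SetLike.GradeZero.subring 𝒜).subtype).IsPrime ∧
      Ideal.map (SetLike.GradeZero.subring 𝒜).subtype
        (q.comap (SetLike.GradeZero.subring 𝒜).subtype) = q) ∧
    (∀ p : Ideal (SetLike.GradeZero.subring 𝒜), p.IsPrime →
      (Ideal.map (SetLike.GradeZero.subring 𝒜).subtype p).IsHomogeneous 𝒜 ∧
      (Ideal.map (SetLike.GradeZero.subring 𝒜).subtype p).IsPrime ∧
      (Ideal.map (SetLike.GradeZero.subring 𝒜).subtype p).comap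
        (SetLike.GradeZero.subring 𝒜).subtype = p) ∧
    (∀ q₁ q₂ : Ideal R, q₁ ≤ q₂ →
      q₁.comap (SetLike.GradeZero.subring 𝒜).subtype ≤
        q₂.comap (SetLike.GradeZero.subring 𝒜).subtype) ∧
    (∀ p₁ p₂ : Ideal (SetLike.GradeZero.subring 𝒜), p₁ ≤ p₂ →
      Ideal.map (SetLike.GradeZero.subring 𝒜).subtype p₁ ≤
        Ideal.map (SetLike.GradeZero.subring 𝒜).subtype p₂) := by
  obtain ⟨contract, extend⟩ := homogeneousPrime_equiv_prime_gradeZero_general 𝒜 fun _ ↦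
    exists_associated_mem_gradeZero_of_even_of_periodic 𝒜
      (fun i hi x hx ↦ by simpa only [heven i hi, AddSubgroup.mem_bot] using hx) hperiodic
  exact ⟨fun q hq hprime ↦ (contract q hq).imp_left (·.mpr hprime),
    fun p hprime ↦ (extend p).imp_right (.imp_left (·.mpr hprime)),
    fun _ _ ↦ Ideal.comap_mono, fun _ _ ↦ Ideal.map_mono⟩
end
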